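/- Let m ∈ ℕ with m ≥ 1, let α ∈ ℝ, and let n ≥ m. Then the polynomial identity (d/dx)L^{I,(α)}_{m,n}(x) = −L_m^{(α−1)}(−x) · L_{n−m−1}^{(α+1)}(x) + L_{m−1}^{(α+1)}(−x) · L_{n−m}^{(α−1)}(x) holds for all x. -/

import Mathlib

open Finset

/-- Generalized binomial coefficient `C(t, j) = t(t-1)⋯(t-j+1)/j!`. -/
noncomputable def genBinom (t : ℝ) (j : ℕ) : ℝ :=
  (∏ i ∈ Finset.range j, (t - i)) / (Nat.factorial j)

/-- Generalized Laguerre polynomial `L_n^{(α)}(x)`, with the convention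
`L_n^{(α)} = 0` for negative integer index `n`. -/
noncomputable def laguerre (α : ℝ) (n : ℤ) (x : ℝ) : ℝ :=
  if 0 ≤ n then
    ∑ k ∈ Finset.range (n.toNat + 1),
      ((-1 : ℝ) ^ k / (Nat.factorial k)) * genBinom ((n : ℝ) + α) (n.toNat - k) * x ^ k
  else 0

/-- Type-I exceptional `X_m`-Laguerre polynomial. -/
noncomputable def XLagI (m : ℕ) (α : ℝ) (n : ℕ) (x : ℝ) : ℝ :=
  laguerre α (m : ℤ) (-x) * laguerre (α - 1) ((n : ℤ) - m) x
    + laguerre (α - 1) (m : ℤ) (-x) * laguerre α ((n : ℤ) - m - 1) x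

/-! All binomial coefficients occurring in `L_n^{(α)}` and in `L_{n-1}^{(α+1)}` have the same upper
entry `n + α`. Hence Pascal's rule, applied coefficient by coefficient, gives
`L_n^{(α+1)} = L_n^{(α)} + L_{n-1}^{(α+1)}`, and termwise differentiation gives
`d/dx L_n^{(α)} = -L_{n-1}^{(α+1)}`. The product rule turns the derivative of `L^{I,(α)}_{m,n}` into
four products; expanding `L_m^{(α)}(-x)` in it and `L_{n-m-1}^{(α+1)}(x)` in the claimed value by
the first identity makes the two agree. -/

theorem genBinom_eq_choose (t : ℝ) (j : ℕ) : genBinom t j = Ring.choose t j := by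
  have hDesc : (descPochhammer ℤ j).smeval t = ∏ i ∈ range j, (t - i) := by
    rw [← descPochhammer_eval_eq_prod_range, ← descPochhammer_map (Int.castRingHom ℝ),
      Polynomial.eval_map, ← Polynomial.eval₂_smulOneHom_eq_smeval]
    congr 1
    exact RingHom.ext_int _ _
  rw [genBinom, Ring.choose_eq_smul, hDesc, smul_eq_mul, div_eq_inv_mul]

section Laguerre

variable (α x : ℝ)

theorem laguerre_of_neg {n : ℤ} (hn : n < 0) : laguerre α n x = 0 :=
  if_neg hn.not_ge

theorem laguerre_natCast (n : ℕ) :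
    laguerre α n x =
      ∑ k ∈ range (n + 1), (-1) ^ k / (k.factorial : ℝ) * Ring.choose (n + α) (n - k) * x ^ k := by
  simp [laguerre, genBinom_eq_choose]

theorem laguerre_zero : laguerre α 0 x = 1 := by
  simpa using laguerre_natCast α x 0

theorem laguerre_add_one_natCast_succ (n : ℕ) :
    laguerre (α + 1) (n + 1 : ℕ) x = laguerre α (n + 1 : ℕ) x + laguerre (α + 1) n x := by
  have hPascal : ∀ k ∈ range (n + 1),
      Ring.choose (((n + 1 : ℕ) : ℝ) + (α + 1)) (n + 1 - k) =
        Ring.choose (n + (α + 1)) (n - k) +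
          Ring.choose (((n + 1 : ℕ) : ℝ) + α) (n + 1 - k) := by
    intro k hk
    have hUpper : ((n + 1 : ℕ) : ℝ) + α = n + (α + 1) := by push_cast; ring
    rw [Nat.succ_sub (mem_range_succ_iff.mp hk), ← add_assoc, hUpper, Ring.choose_succ_succ]
  simp only [laguerre_natCast, sum_range_succ _ (n + 1), Nat.sub_self, Ring.choose_zero_right]
  rw [add_right_comm, ← sum_add_distrib]
  congr 1
  refine sum_congr rfl fun k hk => ?_
  rw [hPascal k hk]
  ring

theorem laguerre_add_one (n : ℤ) :
    laguerre (α + 1) n x = laguerre α n x + laguerre (α + 1) (n - 1) x := by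
  rcases lt_trichotomy n 0 with hn | rfl | hn
  · simp only [laguerre_of_neg _ _ hn, laguerre_of_neg _ _ (by lia : n - 1 < 0), add_zero]
  · simp only [laguerre_zero, laguerre_of_neg _ _ (by lia : (0 : ℤ) - 1 < 0), add_zero]
  · obtain ⟨k, rfl⟩ := Int.eq_succ_of_zero_lt hn
    simpa using laguerre_add_one_natCast_succ α x k

theorem hasDerivAt_laguerre_natCast_succ (n : ℕ) :
    HasDerivAt (laguerre α (n + 1 : ℕ)) (-laguerre (α + 1) n x) x := by
  have hTermwise := HasDerivAt.fun_sum fun k (_ : k ∈ range (n + 1 + 1)) =>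
    (hasDerivAt_pow k x).const_mul
      ((-1) ^ k / (k.factorial : ℝ) * Ring.choose (((n + 1 : ℕ) : ℝ) + α) (n + 1 - k))
  rw [← funext fun y => laguerre_natCast α y (n + 1)] at hTermwise
  refine hTermwise.congr_deriv ?_
  rw [sum_range_succ', laguerre_natCast, ← sum_neg_distrib]
  simp only [Nat.cast_zero, zero_mul, mul_zero, add_zero]
  refine sum_congr rfl fun k _ => ?_
  have hUpper : ((n + 1 : ℕ) : ℝ) + α = n + (α + 1) := by push_cast; ring
  rw [hUpper, Nat.add_sub_add_right, Nat.add_sub_cancel, Nat.factorial_succ]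
  push_cast
  field_simp
  ring

theorem hasDerivAt_laguerre (n : ℤ) :
    HasDerivAt (laguerre α n) (-laguerre (α + 1) (n - 1) x) x := by
  rcases le_or_gt n 0 with hn | hn
  · have hConst : laguerre α n = fun _ => laguerre α n 0 := by
      rcases hn.lt_or_eq with hn | rfl
      · simp only [funext fun y => laguerre_of_neg α y hn]
      · simp only [funext fun y => laguerre_zero α y]
    rw [hConst, laguerre_of_neg _ _ (by lia : n - 1 < 0), neg_zero]
    exact hasDerivAt_const x _
  · obtain ⟨k, rfl⟩ := Int.eq_succ_of_zero_lt hn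
    simpa using hasDerivAt_laguerre_natCast_succ α x k

theorem hasDerivAt_laguerre_neg (n : ℤ) :
    HasDerivAt (fun y => laguerre α n (-y)) (laguerre (α + 1) (n - 1) (-x)) x := by
  refine ((hasDerivAt_laguerre α (-x) n).comp x (hasDerivAt_neg x)).congr_deriv ?_
  rw [neg_mul_neg, mul_one]

end Laguerre

theorem stmt3 (m : ℕ) (hm : 1 ≤ m) (α : ℝ) (n : ℕ) (hmn : m ≤ n) :
    ∀ x : ℝ,
      deriv (XLagI m α n) x =
        -(laguerre (α - 1) (m : ℤ) (-x) * laguerre (α + 1) ((n : ℤ) - m - 1) x)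
          + laguerre (α + 1) ((m : ℤ) - 1) (-x) * laguerre (α - 1) ((n : ℤ) - m) x := by
  intro x
  have hDeriv : HasDerivAt (XLagI m α n)
      (laguerre (α + 1) (m - 1) (-x) * laguerre (α - 1) (n - m) x
          + laguerre α m (-x) * -laguerre α (n - m - 1) x
        + (laguerre α (m - 1) (-x) * laguerre α (n - m - 1) x
          + laguerre (α - 1) m (-x) * -laguerre (α + 1) (n - m - 1 - 1) x)) x := by
    refine (((hasDerivAt_laguerre_neg α x m).mul (hasDerivAt_laguerre (α - 1) x (n - m))).add
      ((hasDerivAt_laguerre_neg (α - 1) x m).mul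
        (hasDerivAt_laguerre α x (n - m - 1)))).congr_deriv ?_
    simp only [sub_add_cancel]
  have hContig_m : laguerre α m (-x) = laguerre (α - 1) m (-x) + laguerre α (m - 1) (-x) := by
    simpa only [sub_add_cancel] using laguerre_add_one (α - 1) (-x) m
  rw [hDeriv.deriv, hContig_m, laguerre_add_one α x (n - m - 1)]
  ring
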